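/- Let X be a nonnegative random variable with E[X] < ∞ and log X integrable. Then E[X] − exp(E[log X]) ≤ max(2·Var(√X), E[(√X − √m_X)²]), where m_X := essInf X. -/

import Mathlib

open MeasureTheory ProbabilityTheory Real

/-- Quadratic minorant of `log` on `[a, ∞)`, exact at `a` and touching at `b`. -/
lemma log_quad_minorant {a b : ℝ} (ha : 0 < a) (hab : a < b) :
    ∃ c d : ℝ, (∀ y, a ≤ y → Real.log a + c * (y - a) + d * (y - a) ^ 2 ≤ Real.log y) ∧
      c * (b - a) + d * (b - a) ^ 2 = Real.log b - Real.log a := by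
  have hb : 0 < b := ha.trans hab
  have hs : b - a ≠ 0 := by linarith
  obtain ⟨d, hd⟩ : ∃ d, d = (1 / b - (Real.log b - Real.log a) / (b - a)) / (b - a) := ⟨_, rfl⟩
  obtain ⟨c, hc⟩ : ∃ c, c = 2 * ((Real.log b - Real.log a) / (b - a)) - 1 / b := ⟨_, rfl⟩
  have e1 : c * (b - a) + d * (b - a) ^ 2 = Real.log b - Real.log a := by
    rw [hc, hd]; field_simp; ring
  have e2 : c + 2 * d * (b - a) = 1 / b := by
    rw [hc, hd]; field_simp; ring
  refine ⟨c, d, ?_, e1⟩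
  set h : ℝ → ℝ := fun y => Real.log y - (Real.log a + c * (y - a) + d * (y - a) ^ 2) with hh
  have hder : ∀ y, 0 < y → HasDerivAt h (1 / y - (c + 2 * d * (y - a))) y := by
    intro y hy
    have h1 := Real.hasDerivAt_log hy.ne'
    have h2 : HasDerivAt (fun y : ℝ => y - a) 1 y := (hasDerivAt_id y).sub_const a
    have h3 := h1.sub (((h2.const_mul c).const_add (Real.log a)).add ((h2.pow 2).const_mul d))
    refine h3.congr_deriv ?_
    simp; ring
  have hcont : ∀ y, 0 < y → ContinuousAt h y := fun y hy => (hder y hy).continuousAt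
  have h0a : h a = 0 := by simp [hh]
  have h0b : h b = 0 := by simp only [hh]; linarith
  obtain ⟨x, ⟨hx1, hx2⟩, hx⟩ := exists_hasDerivAt_eq_zero (f := h)
    (f' := fun y => 1 / y - (c + 2 * d * (y - a))) hab
    (fun y hy => (hcont y (ha.trans_le hy.1)).continuousWithinAt) (by rw [h0a, h0b])
    (fun y hy => hder y (ha.trans hy.1))
  have hx0 : 0 < x := ha.trans hx1
  have k1 : 1 = x * (c + 2 * d * (x - a)) := by
    have : 1 / x = c + 2 * d * (x - a) := by linarith
    rw [← this]; field_simp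
  have k2 : 1 = b * (c + 2 * d * (b - a)) := by rw [e2]; field_simp
  have k3 : c - 2 * d * a = - 2 * d * (x + b) := by
    have : (b - x) * (c - 2 * d * a + 2 * d * (x + b)) = 0 := by linarith
    rcases mul_eq_zero.1 this with h | h <;> linarith
  have k4 : - 2 * d * (x * b) = 1 := by
    have : c = 2 * d * a - 2 * d * (x + b) := by linarith
    rw [this] at k1; linarith
  have hdn : 0 < -2 * d := by
    by_contra hn
    have : 0 < x * b := by positivity
    nlinarith
  have hform : ∀ y, 0 < y → 1 / y - (c + 2 * d * (y - a)) = (-2 * d) * ((y - b) * (y - x)) / y := by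
    intro y hy
    have : c = 2 * d * a - 2 * d * (x + b) := by linarith
    rw [this]; field_simp; linear_combination -k4
  have hder' : ∀ y, 0 < y → deriv h y = (-2 * d) * ((y - b) * (y - x)) / y := by
    intro y hy; rw [(hder y hy).deriv, hform y hy]
  intro y hy
  suffices 0 ≤ h y by simp only [hh] at this; linarith
  have hy0 : 0 < y := ha.trans_le hy
  rcases le_total y x with hyx | hyx
  · have : MonotoneOn h (Set.Icc a x) := by
      apply monotoneOn_of_deriv_nonneg (convex_Icc a x)
      · exact fun z hz => (hcont z (ha.trans_le hz.1)).continuousWithinAt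
      · rw [interior_Icc]
        exact fun z hz => (hder z (ha.trans hz.1)).differentiableAt.differentiableWithinAt
      · rw [interior_Icc]
        intro z hz
        have hz0 := ha.trans hz.1
        rw [hder' z hz0]
        have : 0 ≤ (z - b) * (z - x) :=
          mul_nonneg_of_nonpos_of_nonpos (by linarith [hz.2]) (by linarith [hz.2])
        positivity
    rw [← h0a]; exact this ⟨le_rfl, hx1.le⟩ ⟨hy, hyx⟩ hy
  rcases le_total y b with hyb | hyb
  · have : AntitoneOn h (Set.Icc x b) := by
      apply antitoneOn_of_deriv_nonpos (convex_Icc x b)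
      · exact fun z hz => (hcont z (hx0.trans_le hz.1)).continuousWithinAt
      · rw [interior_Icc]
        exact fun z hz => (hder z (hx0.trans hz.1)).differentiableAt.differentiableWithinAt
      · rw [interior_Icc]
        intro z hz
        have hz0 := hx0.trans hz.1
        rw [hder' z hz0]
        have : (z - b) * (z - x) ≤ 0 :=
          mul_nonpos_of_nonpos_of_nonneg (by linarith [hz.2]) (by linarith [hz.1])
        exact div_nonpos_of_nonpos_of_nonneg
          (mul_nonpos_of_nonneg_of_nonpos hdn.le this) hz0.le
    rw [← h0b]; exact this ⟨hyx, hyb⟩ ⟨hx2.le, le_rfl⟩ hyb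
  · have : MonotoneOn h (Set.Ici b) := by
      apply monotoneOn_of_deriv_nonneg (convex_Ici b)
      · exact fun z hz => (hcont z (hb.trans_le hz)).continuousWithinAt
      · rw [interior_Ici]
        exact fun z hz => (hder z (hb.trans hz)).differentiableAt.differentiableWithinAt
      · rw [interior_Ici]
        intro z hz
        have hzb : b < z := hz
        have hz0 := hb.trans hzb
        rw [hder' z hz0]
        have : 0 ≤ (z - b) * (z - x) :=
          mul_nonneg (by linarith) (by linarith)
        positivity
    rw [← h0b]; exact this (Set.mem_Ici.2 le_rfl) hyb hyb

lemma rpow_taylor_two {x r : ℝ} (hx : 0 ≤ x) (hr0 : 0 ≤ r) (hr1 : r ≤ 1) :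
    1 + r * x - r * (1 - r) / 2 * x ^ 2 ≤ (1 + x) ^ r := by
  set f : ℝ → ℝ := fun x => (1 + x) ^ r - (1 + r * x - r * (1 - r) / 2 * x ^ 2) with hf
  have hder : ∀ y, 0 ≤ y → HasDerivAt f (r * (1 + y) ^ (r - 1) - (r - r * (1 - r) * y)) y := by
    intro y hy
    have h1 : HasDerivAt (fun y : ℝ => 1 + y) 1 y := (hasDerivAt_id y).const_add 1
    have h2 := h1.rpow_const (p := r) (Or.inl (by linarith : (1 + y) ≠ 0))
    have h3 := ((hasDerivAt_id y).const_mul r).const_add 1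
    have h4 := (((hasDerivAt_id y).pow 2)).const_mul (r * (1 - r) / 2)
    refine (h2.sub (h3.sub h4)).congr_deriv ?_
    simp; ring
  have hm : MonotoneOn f (Set.Ici 0) := by
    apply monotoneOn_of_deriv_nonneg (convex_Ici 0)
    · exact fun z hz => (hder z hz).continuousAt.continuousWithinAt
    · rw [interior_Ici]
      exact fun z hz => (hder z (le_of_lt hz)).differentiableAt.differentiableWithinAt
    · rw [interior_Ici]
      intro z hz
      have hz0 : 0 < z := hz
      rw [(hder z hz0.le).deriv]
      have b1 : (1 + z) ^ (1 - r) ≤ 1 + (1 - r) * z :=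
        rpow_one_add_le_one_add_mul_self (by linarith) (by linarith) (by linarith)
      have b2 : (1 + z) ^ (r - 1) = ((1 + z) ^ (1 - r))⁻¹ := by
        rw [← Real.rpow_neg (by linarith)]; congr 1; ring
      have b3 : 0 < (1 + z) ^ (1 - r) := Real.rpow_pos_of_pos (by linarith) _
      have b4 : 1 - (1 - r) * z ≤ (1 + z) ^ (r - 1) := by
        rw [b2]
        have hw : 0 ≤ (1 - r) * z := mul_nonneg (by linarith) hz0.le
        calc 1 - (1 - r) * z ≤ (1 + (1 - r) * z)⁻¹ := by
              rw [← one_div, le_div_iff₀ (by linarith)]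
              nlinarith
          _ ≤ _ := inv_anti₀ b3 b1
      nlinarith
  have := hm (Set.mem_Ici.2 le_rfl) (Set.mem_Ici.2 hx) hx
  simp only [hf] at this
  simp at this
  linarith

/-- Scalar core. -/
lemma scalar_core {a N W L : ℝ} (ha : 0 < a) (hN : 0 < N) (hW : N ^ 2 ≤ W)
    (hL : ∀ c d : ℝ, (∀ y, a ≤ y → Real.log a + c * (y - a) + d * (y - a) ^ 2 ≤ Real.log y) →
      Real.log a + c * N + d * W ≤ L) :
    a ^ 2 + 2 * a * N ≤ Real.exp (2 * L) ∨
      a ^ 2 + 2 * a * N + 2 * N ^ 2 - W ≤ Real.exp (2 * L) := by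
  have hW0 : 0 < W := lt_of_lt_of_le (by positivity) hW
  obtain ⟨t, ht⟩ : ∃ t, t = W / N := ⟨_, rfl⟩
  obtain ⟨p, hp⟩ : ∃ p, p = N ^ 2 / W := ⟨_, rfl⟩
  have htp : 0 < t := by rw [ht]; positivity
  have hpp : 0 < p := by rw [hp]; positivity
  have e1 : p * t = N := by rw [ht, hp]; field_simp
  have e2 : p * t ^ 2 = W := by rw [ht, hp]; field_simp
  obtain ⟨c, d, h1, h2⟩ := log_quad_minorant ha (show a < a + t by linarith)
  have h3 := hL c d h1
  have h4 : c * N + d * W = p * (Real.log (a + t) - Real.log a) := by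
    rw [← h2, ← e1, ← e2]; ring
  have hx : 0 ≤ t / a := by positivity
  have h5 : Real.log (a + t) - Real.log a = Real.log (1 + t / a) := by
    rw [← Real.log_div (by positivity) ha.ne']; congr 1; field_simp
  have h6 : a ^ 2 * (1 + t / a) ^ (2 * p) ≤ Real.exp (2 * L) := by
    have : a ^ 2 * (1 + t / a) ^ (2 * p) =
        Real.exp (2 * (Real.log a + p * Real.log (1 + t / a))) := by
      rw [Real.rpow_def_of_pos (by positivity), mul_add, Real.exp_add]
      congr 1
      · rw [two_mul, Real.exp_add, Real.exp_log ha]; ring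
      · congr 1; ring
    rw [this]; apply Real.exp_le_exp.2
    rw [← h5, ← h4]; linarith
  rcases le_total 1 (2 * p) with hc | hc
  · left
    refine le_trans ?_ h6
    have := one_add_mul_self_le_rpow_one_add (s := t / a) (by linarith) hc
    calc a ^ 2 + 2 * a * N = a ^ 2 * (1 + 2 * p * (t / a)) := by rw [← e1]; field_simp
      _ ≤ _ := by gcongr
  · right
    refine le_trans ?_ h6
    have := rpow_taylor_two hx (by positivity) hc
    calc a ^ 2 + 2 * a * N + 2 * N ^ 2 - W
        = a ^ 2 * (1 + 2 * p * (t / a) - 2 * p * (1 - 2 * p) / 2 * (t / a) ^ 2) := by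
          rw [← e2, ← e1]; field_simp; ring
      _ ≤ _ := by gcongr

/-- Upper bound on the arithmetic-geometric mean difference:
`E X - exp (E log X) ≤ max (2 Var √X) (E (√X - √m_X)²)` where `m_X = essInf X`. -/
theorem arith_geom_upper_bound {Ω : Type*} [MeasurableSpace Ω] {μ : Measure Ω}
    [IsProbabilityMeasure μ] (X : Ω → ℝ) (hXm : Measurable X)
    (hXnn : ∀ᵐ ω ∂μ, 0 ≤ X ω) (hXint : Integrable X μ)
    (hlog : Integrable (fun ω => Real.log (X ω)) μ) :
    (∫ ω, X ω ∂μ) - Real.exp (∫ ω, Real.log (X ω) ∂μ) ≤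
      max (2 * variance (fun ω => Real.sqrt (X ω)) μ)
        (∫ ω, (Real.sqrt (X ω) - Real.sqrt (essInf X μ)) ^ 2 ∂μ) := by
  have hYm : Measurable (fun ω => Real.sqrt (X ω)) := hXm.sqrt
  have hsq : (fun ω => Real.sqrt (X ω) ^ 2) =ᵐ[μ] X := by
    filter_upwards [hXnn] with ω h using Real.sq_sqrt h
  have hY2 : Integrable (fun ω => Real.sqrt (X ω) ^ 2) μ := hXint.congr hsq.symm
  have hLp : MemLp (fun ω => Real.sqrt (X ω)) 2 μ :=
    (memLp_two_iff_integrable_sq hYm.aestronglyMeasurable).2 hY2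
  have hY1 : Integrable (fun ω => Real.sqrt (X ω)) μ := hLp.integrable (by norm_num)
  rcases le_or_gt (essInf X μ) 0 with hm | hm
  · refine le_trans ?_ (le_max_right _ _)
    have : ∫ ω, (Real.sqrt (X ω) - Real.sqrt (essInf X μ)) ^ 2 ∂μ = ∫ ω, X ω ∂μ := by
      rw [Real.sqrt_eq_zero_of_nonpos hm]
      simp only [sub_zero]
      exact integral_congr_ae hsq
    rw [this]
    linarith [Real.exp_pos (∫ ω, Real.log (X ω) ∂μ)]
  have hmX : ∀ᵐ ω ∂μ, essInf X μ ≤ X ω :=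
    ae_essInf_le (hf := ⟨0, by simpa using hXnn⟩)
  obtain ⟨a, ha⟩ : ∃ a, a = Real.sqrt (essInf X μ) := ⟨_, rfl⟩
  rw [← ha]
  have ha0 : 0 < a := by rw [ha]; exact Real.sqrt_pos.2 hm
  have haY : ∀ᵐ ω ∂μ, a ≤ Real.sqrt (X ω) := by
    filter_upwards [hmX] with ω h
    rw [ha]; exact Real.sqrt_le_sqrt h
  have hZ2 : Integrable (fun ω => (Real.sqrt (X ω) - a) ^ 2) μ :=
    (hLp.sub (memLp_const a)).integrable_sq
  have hlogY : Integrable (fun ω => Real.log (Real.sqrt (X ω))) μ := by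
    refine (hlog.div_const 2).congr ?_
    filter_upwards [hXnn] with ω h using (Real.log_sqrt h).symm
  have hlogeq : ∫ ω, Real.log (X ω) ∂μ = 2 * ∫ ω, Real.log (Real.sqrt (X ω)) ∂μ := by
    rw [← integral_const_mul]
    apply integral_congr_ae
    filter_upwards [hXnn] with ω h
    rw [Real.log_sqrt h]; ring
  have hS : ∫ ω, X ω ∂μ = ∫ ω, Real.sqrt (X ω) ^ 2 ∂μ := (integral_congr_ae hsq).symm
  have hV : variance (fun ω => Real.sqrt (X ω)) μ =
      ∫ ω, Real.sqrt (X ω) ^ 2 ∂μ - (∫ ω, Real.sqrt (X ω) ∂μ) ^ 2 := variance_eq_sub hLp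
  have hVnn := variance_nonneg (fun ω => Real.sqrt (X ω)) μ
  have hWeq : ∫ ω, (Real.sqrt (X ω) - a) ^ 2 ∂μ =
      ∫ ω, Real.sqrt (X ω) ^ 2 ∂μ - 2 * a * ∫ ω, Real.sqrt (X ω) ∂μ + a ^ 2 := by
    have : ∀ ω, (Real.sqrt (X ω) - a) ^ 2 =
        Real.sqrt (X ω) ^ 2 - 2 * a * Real.sqrt (X ω) + a ^ 2 := fun ω => by ring
    simp only [this]
    have hi : Integrable (fun ω => Real.sqrt (X ω) ^ 2 - 2 * a * Real.sqrt (X ω)) μ :=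
      hY2.sub (hY1.const_mul _)
    rw [integral_add hi (integrable_const _),
      integral_sub hY2 (hY1.const_mul _), integral_const_mul]
    simp
  have hL : ∀ c d : ℝ,
      (∀ y, a ≤ y → Real.log a + c * (y - a) + d * (y - a) ^ 2 ≤ Real.log y) →
      Real.log a + c * (∫ ω, Real.sqrt (X ω) ∂μ - a) +
        d * ∫ ω, (Real.sqrt (X ω) - a) ^ 2 ∂μ ≤ ∫ ω, Real.log (Real.sqrt (X ω)) ∂μ := by
    intro c d h
    have hi1 : Integrable (fun ω => c * (Real.sqrt (X ω) - a)) μ :=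
      (hY1.sub (integrable_const a)).const_mul c
    have hi0 : Integrable (fun ω => Real.log a + c * (Real.sqrt (X ω) - a)) μ :=
      (integrable_const _).add hi1
    have : ∫ ω, (Real.log a + c * (Real.sqrt (X ω) - a) + d * (Real.sqrt (X ω) - a) ^ 2) ∂μ ≤
        ∫ ω, Real.log (Real.sqrt (X ω)) ∂μ := by
      apply integral_mono_ae (hi0.add (hZ2.const_mul d)) hlogY
      filter_upwards [haY] with ω hω using h _ hω
    rw [integral_add hi0 (hZ2.const_mul d), integral_add (integrable_const _) hi1,
      integral_const_mul, integral_const_mul, integral_sub hY1 (integrable_const a)] at this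
    simpa using this
  have hM : a ≤ ∫ ω, Real.sqrt (X ω) ∂μ := by
    have := integral_mono_ae (integrable_const a) hY1 haY
    simpa using this
  rw [hV, hS, hlogeq, le_max_iff, hWeq]
  rw [hWeq] at hL
  rw [hV] at hVnn
  generalize (∫ ω, Real.log (Real.sqrt (X ω)) ∂μ) = L at *
  generalize (∫ ω, Real.sqrt (X ω) ^ 2 ∂μ) = S at *
  generalize (∫ ω, Real.sqrt (X ω) ∂μ) = M at *
  rcases hM.eq_or_lt with hM | hM
  · right
    have h0 := hL 0 0 (fun y hy => by simpa using Real.log_le_log ha0 hy)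
    have : a ^ 2 ≤ Real.exp (2 * L) := by
      calc a ^ 2 = Real.exp (2 * Real.log a) := by
            rw [two_mul, Real.exp_add, Real.exp_log ha0]; ring
        _ ≤ _ := Real.exp_le_exp.2 (by linarith)
    rw [← hM]; nlinarith
  · rcases scalar_core ha0 (sub_pos.2 hM) (by nlinarith) hL with h | h
    · right; nlinarith
    · left; nlinarith
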